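/- arXiv:1109.6253 — 2 statements merged into one kernel-verified Lean document; each statement's English description precedes it below -/
import Mathlib

section
/- The volume of the rational polytope {(η1,η2,η3,η4,u) ∈ [0,1]^5 : η_i ≤ u for i = 1,2,3,4, and 2u - 2 ≤ η1 + η2 - η3 - η4 ≤ 2 - 2u} equals 4/45. -/
open MeasureTheory

/-- Truncated power. -/
noncomputable def tp (k : ℕ) (c : ℝ) : ℝ := (max c 0) ^ k

@[fun_prop]
lemma tp_cont (k : ℕ) : Continuous (tp k) := by
  unfold tp; fun_prop

lemma tp_deriv (k : ℕ) (hk : 1 ≤ k) (x : ℝ) :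
    HasDerivAt (tp (k+1)) (((k:ℝ)+1) * tp k x) x := by
  have key : ∀ y : ℝ, y ≠ 0 → HasDerivAt (tp (k+1)) (((k:ℝ)+1) * tp k y) y := by
    intro y hy
    rcases lt_or_gt_of_ne hy with h | h
    · have e : tp (k+1) =ᶠ[nhds y] fun _ => 0 := by
        filter_upwards [gt_mem_nhds h] with z hz
        simp [tp, max_eq_right (le_of_lt hz)]
      have h0 : ((k:ℝ)+1) * tp k y = 0 := by
        have : k ≠ 0 := by omega
        simp [tp, max_eq_right h.le, this]
      rw [h0]
      exact (hasDerivAt_const y (0:ℝ)).congr_of_eventuallyEq e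
    · have e : tp (k+1) =ᶠ[nhds y] fun z => z ^ (k+1) := by
        filter_upwards [lt_mem_nhds h] with z hz
        simp [tp, max_eq_left (le_of_lt hz)]
      have h0 : ((k:ℝ)+1) * tp k y = ((k+1 : ℕ):ℝ) * y ^ (k+1-1) := by
        simp [tp, max_eq_left h.le]
      rw [h0]
      exact (hasDerivAt_pow (k+1) y).congr_of_eventuallyEq e
  by_cases hx : x = 0
  · subst hx
    exact hasDerivAt_of_hasDerivAt_of_ne (g := fun y => ((k:ℝ)+1) * tp k y) key
      (tp_cont _).continuousAt (by fun_prop)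
  · exact key x hx

lemma tp_int (k : ℕ) (hk : 1 ≤ k) (c b l r : ℝ) (hb : b ≠ 0) :
    ∫ x in l..r, tp k (c + b * x) =
      (tp (k+1) (c + b * r) - tp (k+1) (c + b * l)) / (b * (k+1)) := by
  have hk1 : (k:ℝ) + 1 ≠ 0 := by positivity
  have h : ∀ x ∈ Set.uIcc l r,
      HasDerivAt (fun x => tp (k+1) (c + b * x) / (b * (k+1))) (tp k (c + b * x)) x := by
    intro x _
    have h1 : HasDerivAt (fun x : ℝ => c + b * x) b x := by
      simpa using ((hasDerivAt_id x).const_mul b).const_add c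
    have h2 := ((tp_deriv k hk (c + b * x)).comp x h1).div_const (b * (k+1))
    have h3 : ((k:ℝ)+1) * tp k (c + b * x) * b / (b * (k+1)) = tp k (c + b * x) := by
      field_simp
    rw [h3] at h2
    exact h2
  rw [intervalIntegral.integral_eq_sub_of_hasDerivAt h
    ((by fun_prop : Continuous fun x => tp k (c + b * x)).intervalIntegrable _ _)]
  ring

lemma slice {n : ℕ} (i : Fin (n+1)) (S : Set (Fin (n+1) → ℝ)) (hS : MeasurableSet S)
    (a b : ℝ) (hab : a ≤ b) (f : ℝ → ℝ) (hf : Continuous f)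
    (h : ∀ x ∈ Set.Icc a b,
      0 ≤ f x ∧ volume {w : Fin n → ℝ | i.insertNth x w ∈ S} = ENNReal.ofReal (f x))
    (h0 : ∀ w ∈ S, w i ∈ Set.Icc a b) :
    0 ≤ (∫ x in a..b, f x) ∧ volume S = ENNReal.ofReal (∫ x in a..b, f x) := by
  have hnn : 0 ≤ ∫ x in a..b, f x :=
    intervalIntegral.integral_nonneg hab fun x hx => (h x hx).1
  refine ⟨hnn, ?_⟩
  have mp := (volume_preserving_piFinSuccAbove (fun _ : Fin (n+1) => ℝ) i).symm
  rw [← mp.measure_preimage hS.nullMeasurableSet, Measure.volume_eq_prod,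
    Measure.prod_apply (mp.measurable hS)]
  have e : ∀ x : ℝ, volume (Prod.mk x ⁻¹'
      ((MeasurableEquiv.piFinSuccAbove (fun _ : Fin (n+1) => ℝ) i).symm ⁻¹' S))
      = (Set.Icc a b).indicator (fun x => ENNReal.ofReal (f x)) x := by
    intro x
    by_cases hx : x ∈ Set.Icc a b
    · rw [Set.indicator_of_mem hx, ← (h x hx).2]
      rfl
    · rw [Set.indicator_of_notMem hx]
      convert measure_empty (μ := (volume : Measure (Fin n → ℝ)))
      ext w
      simp only [Set.mem_preimage, Set.mem_empty_iff_false, iff_false]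
      intro hw
      apply hx
      have h5 : (i.insertNth x w : Fin (n+1) → ℝ) i ∈ Set.Icc a b := h0 _ hw
      rwa [Fin.insertNth_apply_same] at h5
  simp_rw [e]
  rw [lintegral_indicator measurableSet_Icc, intervalIntegral.integral_of_le hab,
    ← integral_Icc_eq_integral_Ioc, ofReal_integral_eq_lintegral_ofReal]
  · exact hf.integrableOn_Icc
  · filter_upwards [ae_restrict_mem measurableSet_Icc] with x hx
    exact (h x hx).1

noncomputable def g1 (u c : ℝ) : ℝ := tp 1 c - tp 1 (c - u)
noncomputable def g2 (u c : ℝ) : ℝ := (tp 2 c - 2 * tp 2 (c - u) + tp 2 (c - 2 * u)) / 2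
noncomputable def g3 (u c : ℝ) : ℝ :=
  (tp 3 (c + u) - 3 * tp 3 c + 3 * tp 3 (c - u) - tp 3 (c - 2 * u)) / 6
noncomputable def g4 (u c : ℝ) : ℝ :=
  (tp 4 (c + 2 * u) - 4 * tp 4 (c + u) + 6 * tp 4 c - 4 * tp 4 (c - u) + tp 4 (c - 2 * u)) / 24

lemma g1_int (u c : ℝ) : ∫ x in (0:ℝ)..u, g1 u (c - x) = g2 u c := by
  have e : ∀ x, g1 u (c - x) = tp 1 (c + (-1) * x) - tp 1 ((c - u) + (-1) * x) := by
    intro x; unfold g1; ring_nf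
  simp_rw [e]
  rw [intervalIntegral.integral_sub (Continuous.intervalIntegrable (by fun_prop) _ _)
    (Continuous.intervalIntegrable (by fun_prop) _ _)]
  simp only [tp_int 1 le_rfl _ (-1) _ _ (by norm_num)]
  unfold g2
  rw [show c - u + -1 * u = c - 2 * u by ring, show c + -1 * u = c - u by ring]
  norm_num
  ring

lemma g2_int (u c : ℝ) : ∫ x in (0:ℝ)..u, g2 u (c + x) = g3 u c := by
  have e : ∀ x, g2 u (c + x) = (1/2) * tp 2 (c + 1 * x) - tp 2 ((c - u) + 1 * x)
      + (1/2) * tp 2 ((c - 2 * u) + 1 * x) := by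
    intro x; unfold g2; ring_nf
  simp_rw [e]
  rw [intervalIntegral.integral_add (Continuous.intervalIntegrable (by fun_prop) _ _)
    (Continuous.intervalIntegrable (by fun_prop) _ _),
    intervalIntegral.integral_sub (Continuous.intervalIntegrable (by fun_prop) _ _)
    (Continuous.intervalIntegrable (by fun_prop) _ _)]
  simp only [intervalIntegral.integral_const_mul, tp_int 2 one_le_two _ 1 _ _ (by norm_num)]
  unfold g3
  rw [show c - u + 1 * u = c by ring, show c - 2 * u + 1 * u = c - u by ring]
  norm_num
  ring

lemma g3_int (u c : ℝ) : ∫ x in (0:ℝ)..u, g3 u (c + x) = g4 u c := by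
  have e : ∀ x, g3 u (c + x) = (1/6) * tp 3 ((c + u) + 1 * x) - (1/2) * tp 3 (c + 1 * x)
      + (1/2) * tp 3 ((c - u) + 1 * x) - (1/6) * tp 3 ((c - 2 * u) + 1 * x) := by
    intro x; unfold g3; ring_nf
  simp_rw [e]
  rw [intervalIntegral.integral_sub (Continuous.intervalIntegrable (by fun_prop) _ _)
    (Continuous.intervalIntegrable (by fun_prop) _ _),
    intervalIntegral.integral_add (Continuous.intervalIntegrable (by fun_prop) _ _)
    (Continuous.intervalIntegrable (by fun_prop) _ _),
    intervalIntegral.integral_sub (Continuous.intervalIntegrable (by fun_prop) _ _)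
    (Continuous.intervalIntegrable (by fun_prop) _ _)]
  simp only [intervalIntegral.integral_const_mul, tp_int 3 (by norm_num) _ 1 _ _ (by norm_num)]
  unfold g4
  rw [show c - u + 1 * u = c by ring, show c - 2 * u + 1 * u = c - u by ring,
    show c + u + 1 * u = c + 2 * u by ring]
  norm_num
  ring

lemma g4_int : ∫ u in (0:ℝ)..1, (g4 u (0 + (2 - 2 * u)) - g4 u (0 - (2 - 2 * u))) = 4 / 45 := by
  have e : ∀ u, g4 u (0 + (2 - 2 * u)) - g4 u (0 - (2 - 2 * u)) =
      (1/24) * tp 4 2 - (1/6) * tp 4 (2 + (-1) * u) + (1/4) * tp 4 (2 + (-2) * u)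
       - (1/6) * tp 4 (2 + (-3) * u) + (1/24) * tp 4 (2 + (-4) * u)
       - (1/24) * tp 4 (-2 + 4 * u) + (1/6) * tp 4 (-2 + 3 * u) - (1/4) * tp 4 (-2 + 2 * u)
       + (1/6) * tp 4 (-2 + 1 * u) - (1/24) * tp 4 (-2) := by
    intro u; unfold g4; ring_nf
  simp_rw [e]
  have hi : ∀ f : ℝ → ℝ, Continuous f → IntervalIntegrable f volume 0 1 :=
    fun f hf => hf.intervalIntegrable _ _
  rw [intervalIntegral.integral_sub (hi _ (by fun_prop)) (hi _ (by fun_prop)),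
    intervalIntegral.integral_add (hi _ (by fun_prop)) (hi _ (by fun_prop)),
    intervalIntegral.integral_sub (hi _ (by fun_prop)) (hi _ (by fun_prop)),
    intervalIntegral.integral_add (hi _ (by fun_prop)) (hi _ (by fun_prop)),
    intervalIntegral.integral_sub (hi _ (by fun_prop)) (hi _ (by fun_prop)),
    intervalIntegral.integral_add (hi _ (by fun_prop)) (hi _ (by fun_prop)),
    intervalIntegral.integral_sub (hi _ (by fun_prop)) (hi _ (by fun_prop)),
    intervalIntegral.integral_add (hi _ (by fun_prop)) (hi _ (by fun_prop)),
    intervalIntegral.integral_sub (hi _ (by fun_prop)) (hi _ (by fun_prop))]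
  simp only [intervalIntegral.integral_const_mul, intervalIntegral.integral_const]
  rw [tp_int 4 (by norm_num) _ (-1) _ _ (by norm_num),
    tp_int 4 (by norm_num) _ (-2) _ _ (by norm_num),
    tp_int 4 (by norm_num) _ (-3) _ _ (by norm_num),
    tp_int 4 (by norm_num) _ (-4) _ _ (by norm_num),
    tp_int 4 (by norm_num) _ 4 _ _ (by norm_num),
    tp_int 4 (by norm_num) _ 3 _ _ (by norm_num),
    tp_int 4 (by norm_num) _ 2 _ _ (by norm_num),
    tp_int 4 (by norm_num) _ 1 _ _ (by norm_num)]
  norm_num [tp]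

lemma vol1 (u s D : ℝ) (hu : 0 ≤ u) (hs : 0 ≤ s) :
    0 ≤ g1 u (D + s) - g1 u (D - s) ∧
    volume {w : Fin 1 → ℝ | (∀ i, 0 ≤ w i ∧ w i ≤ u) ∧ -s ≤ D - w 0 ∧ D - w 0 ≤ s}
      = ENNReal.ofReal (g1 u (D + s) - g1 u (D - s)) := by
  have hset : {w : Fin 1 → ℝ | (∀ i, 0 ≤ w i ∧ w i ≤ u) ∧ -s ≤ D - w 0 ∧ D - w 0 ≤ s}
      = Set.Icc (fun _ => max 0 (D - s)) (fun _ => min u (D + s)) := by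
    ext w
    simp only [Set.mem_ofPred_eq, Set.mem_Icc, Pi.le_def, Fin.forall_fin_one, max_le_iff, le_min_iff]
    constructor
    · rintro ⟨⟨a, b⟩, c, d⟩
      exact ⟨⟨a, by linarith⟩, b, by linarith⟩
    · rintro ⟨⟨a, b⟩, c, d⟩
      exact ⟨⟨a, c⟩, by linarith, by linarith⟩
  have hv : g1 u (D + s) - g1 u (D - s) = max (min u (D + s) - max 0 (D - s)) 0 := by
    unfold g1 tp
    simp only [pow_one]
    grind
  rw [hset, Real.volume_Icc_pi, hv]
  refine ⟨le_max_right _ _, ?_⟩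
  simp [ENNReal.ofReal_max]

lemma vol2 (u s D : ℝ) (hu : 0 ≤ u) (hs : 0 ≤ s) :
    0 ≤ g2 u (D + s) - g2 u (D - s) ∧
    volume {w : Fin 2 → ℝ | (∀ i, 0 ≤ w i ∧ w i ≤ u) ∧
      -s ≤ D - w 0 - w 1 ∧ D - w 0 - w 1 ≤ s}
      = ENNReal.ofReal (g2 u (D + s) - g2 u (D - s)) := by
  have hI : ∫ x in (0:ℝ)..u, (g1 u (D - x + s) - g1 u (D - x - s))
      = g2 u (D + s) - g2 u (D - s) := by
    rw [← g1_int, ← g1_int, ← intervalIntegral.integral_sub]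
    · congr 1; ext x; congr 2 <;> ring
    all_goals exact Continuous.intervalIntegrable (by unfold g1; fun_prop) _ _
  rw [← hI]
  refine slice 0 _ (by measurability) 0 u hu _ (by unfold g1; fun_prop) ?_ (fun w hw => hw.1 0)
  intro x hx
  have := vol1 u s (D - x) hu hs
  refine ⟨this.1, ?_⟩
  rw [← this.2]
  congr 1
  ext w
  have := hx.1
  have := hx.2
  simp [Fin.forall_fin_succ, *]

lemma vol3 (u s D : ℝ) (hu : 0 ≤ u) (hs : 0 ≤ s) :
    0 ≤ g3 u (D + s) - g3 u (D - s) ∧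
    volume {w : Fin 3 → ℝ | (∀ i, 0 ≤ w i ∧ w i ≤ u) ∧
      -s ≤ D + w 0 - w 1 - w 2 ∧ D + w 0 - w 1 - w 2 ≤ s}
      = ENNReal.ofReal (g3 u (D + s) - g3 u (D - s)) := by
  have hI : ∫ x in (0:ℝ)..u, (g2 u (D + x + s) - g2 u (D + x - s))
      = g3 u (D + s) - g3 u (D - s) := by
    rw [← g2_int, ← g2_int, ← intervalIntegral.integral_sub]
    · congr 1; ext x; congr 2 <;> ring
    all_goals exact Continuous.intervalIntegrable (by unfold g2; fun_prop) _ _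
  rw [← hI]
  refine slice 0 _ (by measurability) 0 u hu _ (by unfold g2; fun_prop) ?_ (fun w hw => hw.1 0)
  intro x hx
  have := vol2 u s (D + x) hu hs
  refine ⟨this.1, ?_⟩
  rw [← this.2]
  congr 1
  ext w
  have := hx.1
  have := hx.2
  have e : (Fin.cons x w : Fin 3 → ℝ) 2 = w 1 := rfl
  simp [Fin.forall_fin_succ, *]

lemma vol4 (u s D : ℝ) (hu : 0 ≤ u) (hs : 0 ≤ s) :
    0 ≤ g4 u (D + s) - g4 u (D - s) ∧
    volume {w : Fin 4 → ℝ | (∀ i, 0 ≤ w i ∧ w i ≤ u) ∧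
      -s ≤ D + w 0 + w 1 - w 2 - w 3 ∧ D + w 0 + w 1 - w 2 - w 3 ≤ s}
      = ENNReal.ofReal (g4 u (D + s) - g4 u (D - s)) := by
  have hI : ∫ x in (0:ℝ)..u, (g3 u (D + x + s) - g3 u (D + x - s))
      = g4 u (D + s) - g4 u (D - s) := by
    rw [← g3_int, ← g3_int, ← intervalIntegral.integral_sub]
    · congr 1; ext x; congr 2 <;> ring
    all_goals exact Continuous.intervalIntegrable (by unfold g3; fun_prop) _ _
  rw [← hI]
  refine slice 0 _ (by measurability) 0 u hu _ (by unfold g3; fun_prop) ?_ (fun w hw => hw.1 0)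
  intro x hx
  have := vol3 u s (D + x) hu hs
  refine ⟨this.1, ?_⟩
  rw [← this.2]
  congr 1
  ext w
  have := hx.1
  have := hx.2
  have e : (Fin.cons x w : Fin 4 → ℝ) 2 = w 1 := rfl
  have e' : (Fin.cons x w : Fin 4 → ℝ) 3 = w 2 := rfl
  simp [Fin.forall_fin_succ, *]

theorem stmt_11 :
    volume {z : Fin 5 → ℝ |
        (∀ i, 0 ≤ z i ∧ z i ≤ 1) ∧
        z 0 ≤ z 4 ∧ z 1 ≤ z 4 ∧ z 2 ≤ z 4 ∧ z 3 ≤ z 4 ∧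
        2 * z 4 - 2 ≤ z 0 + z 1 - z 2 - z 3 ∧
        z 0 + z 1 - z 2 - z 3 ≤ 2 - 2 * z 4} = ENNReal.ofReal (4 / 45) := by
  rw [← g4_int]
  refine (slice 4 _ (by measurability) 0 1 zero_le_one _ (by unfold g4; fun_prop) ?_
    (fun w hw => hw.1 4)).2
  intro u hu
  have := vol4 u (2 - 2 * u) 0 hu.1 (by linarith [hu.2])
  refine ⟨this.1, ?_⟩
  rw [← this.2]
  congr 1
  ext w
  have h0 := hu.1
  have h1 := hu.2
  have e0 : ((4 : Fin 5).insertNth u w : Fin 5 → ℝ) 0 = w 0 := rfl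
  have e1 : ((4 : Fin 5).insertNth u w : Fin 5 → ℝ) 1 = w 1 := rfl
  have e2 : ((4 : Fin 5).insertNth u w : Fin 5 → ℝ) 2 = w 2 := rfl
  have e3 : ((4 : Fin 5).insertNth u w : Fin 5 → ℝ) 3 = w 3 := rfl
  have e4 : ((4 : Fin 5).insertNth u w : Fin 5 → ℝ) 4 = u := rfl
  simp only [Set.mem_ofPred_eq]
  have f5 : ∀ p : Fin 5 → Prop, (∀ i, p i) ↔ p 0 ∧ p 1 ∧ p 2 ∧ p 3 ∧ p 4 := by
    intro p; simp [Fin.forall_fin_succ]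
  have f4 : ∀ p : Fin 4 → Prop, (∀ i, p i) ↔ p 0 ∧ p 1 ∧ p 2 ∧ p 3 := by
    intro p; simp [Fin.forall_fin_succ]
  rw [f5, f4, e0, e1, e2, e3, e4]
  constructor
  · rintro ⟨⟨a, b, c, d, e⟩, h⟩
    refine ⟨⟨⟨?_, ?_⟩, ⟨?_, ?_⟩, ⟨?_, ?_⟩, ⟨?_, ?_⟩⟩, ?_, ?_⟩ <;> linarith [a.1, b.1, c.1, d.1, h.1, h.2.1, h.2.2.1, h.2.2.2.1, h.2.2.2.2.1, h.2.2.2.2.2]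
  · rintro ⟨⟨a, b, c, d⟩, h⟩
    refine ⟨⟨⟨?_, ?_⟩, ⟨?_, ?_⟩, ⟨?_, ?_⟩, ⟨?_, ?_⟩, ?_, ?_⟩, ?_, ?_, ?_, ?_, ?_, ?_⟩ <;> linarith [a.1, b.1, c.1, d.1, a.2, b.2, c.2, d.2, h.1, h.2]
end

section
/- Let Λ ⊂ ℝ² be a lattice with first successive minimum λ1 (the length of its shortest nonzero vector), and let R ⊂ ℝ² be a compact convex region containing the origin with boundary length L. Then #{x ∈ Λ ∩ R : x ≠ 0} = area(R)/det(Λ) + O(L/λ1), i.e., there is an absolute constant C such that |#{x ∈ Λ ∩ R, x ≠ 0} − area(R)/det(Λ)| ≤ C·L/λ1. -/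
open MeasureTheory

lemma count1 (I : Set ℝ) (hc : IsCompact I) (hv : Convex ℝ I) (S : Finset ℤ)
    (hS : ∀ n : ℤ, (n : ℝ) ∈ I → n ∈ S) :
    |∑ k ∈ S, I.indicator (fun _ => (1 : ℝ)) (k : ℝ) - volume.real I| ≤ 1 := by
  classical
  rcases I.eq_empty_or_nonempty with rfl | hne
  · simp
  have hI : I = Set.Icc (sInf I) (sSup I) := by
    have := hv.isPreconnected
    exact eq_Icc_of_connected_compact ⟨hne, this⟩ hc
  set a := sInf I
  set b := sSup I
  have hab : a ≤ b := by
    by_contra h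
    rw [hI, Set.Icc_eq_empty h] at hne
    exact Set.not_nonempty_empty hne
  have h1 : ∑ k ∈ S, I.indicator (fun _ => (1 : ℝ)) (k : ℝ) = ((Finset.Icc ⌈a⌉ ⌊b⌋).card : ℝ) := by
    simp only [Set.indicator_apply]
    rw [Finset.sum_boole]
    congr 2
    ext k
    simp only [Finset.mem_filter, Finset.mem_Icc, Int.ceil_le, Int.le_floor]
    constructor
    · rintro ⟨_, h⟩
      rw [hI] at h; exact h
    · intro h
      have : (k : ℝ) ∈ I := by rw [hI]; exact h
      exact ⟨hS k this, this⟩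
  have h2 : volume.real I = b - a := by
    rw [hI, Real.volume_real_Icc_of_le hab]
  have h3 : ((Finset.Icc ⌈a⌉ ⌊b⌋).card : ℤ) = ⌊b⌋ + 1 - ⌈a⌉ := by
    rw [Int.card_Icc]
    apply Int.toNat_of_nonneg
    have : (⌈a⌉ : ℝ) < ⌊b⌋ + 2 := by
      linarith [Int.ceil_lt_add_one a, Int.lt_floor_add_one b]
    have : ⌈a⌉ < ⌊b⌋ + 2 := by exact_mod_cast this
    omega
  have h3' : ((Finset.Icc ⌈a⌉ ⌊b⌋).card : ℝ) = ⌊b⌋ + 1 - ⌈a⌉ := by exact_mod_cast h3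
  rw [h1, h2, h3', abs_le]
  constructor <;> linarith [Int.ceil_lt_add_one a, Int.lt_floor_add_one b, Int.floor_le b, Int.le_ceil a]

lemma count2 (K : Set (ℝ × ℝ)) (hc : IsCompact K) (hv : Convex ℝ K) (M : ℝ) (hM : 0 ≤ M)
    (hK : ∀ p ∈ K, |p.1| ≤ M ∧ |p.2| ≤ M) (S : Finset ℤ)
    (hS : ∀ n : ℤ, |(n : ℝ)| ≤ M → n ∈ S) :
    |∑ k ∈ S, ∑ m ∈ S, K.indicator (fun _ => (1 : ℝ)) ((m : ℝ), (k : ℝ)) - volume.real K|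
      ≤ S.card + 2 * M := by
  have hcl := hc.isClosed
  -- slices
  have hsl1 : ∀ t : ℝ, IsCompact {s : ℝ | (s, t) ∈ K} ∧ Convex ℝ {s : ℝ | (s, t) ∈ K} := by
    intro t
    refine ⟨?_, ?_⟩
    · apply (isCompact_Icc (a := -M) (b := M)).of_isClosed_subset
      · exact hcl.preimage (by fun_prop : Continuous fun s : ℝ => (s, t))
      · intro s hs; exact abs_le.1 (hK _ hs).1
    · intro x hx y hy a b ha hb hab
      have := hv hx hy ha hb hab
      simp only [Prod.smul_mk, Prod.mk_add_mk, ← add_smul, hab, one_smul] at this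
      exact this
  have hsl2 : ∀ s : ℝ, IsCompact {t : ℝ | (s, t) ∈ K} ∧ Convex ℝ {t : ℝ | (s, t) ∈ K} := by
    intro s
    refine ⟨?_, ?_⟩
    · apply (isCompact_Icc (a := -M) (b := M)).of_isClosed_subset
      · exact hcl.preimage (by fun_prop : Continuous fun t : ℝ => (s, t))
      · intro t hs; exact abs_le.1 (hK _ hs).2
    · intro x hx y hy a b ha hb hab
      have := hv hx hy ha hb hab
      simp only [Prod.smul_mk, Prod.mk_add_mk, ← add_smul, hab, one_smul] at this
      exact this
  have e1 : |∑ k ∈ S, ∑ m ∈ S, K.indicator (fun _ => (1 : ℝ)) ((m : ℝ), (k : ℝ))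
      - ∑ k ∈ S, volume.real {s : ℝ | (s, (k : ℝ)) ∈ K}| ≤ S.card := by
    rw [← Finset.sum_sub_distrib]
    refine (Finset.abs_sum_le_sum_abs _ _).trans ?_
    have : (S.card : ℝ) = ∑ k ∈ S, (1 : ℝ) := by simp
    rw [this]
    apply Finset.sum_le_sum
    intro k _
    exact count1 _ (hsl1 k).1 (hsl1 k).2 S (fun n hn => hS n (hK _ hn).1)
  -- Tonelli
  have hmeas : MeasurableSet K := hcl.measurableSet
  have hKint : Integrable (K.indicator (fun _ => (1 : ℝ))) (volume : Measure (ℝ × ℝ)) :=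
    (integrable_indicator_iff hmeas).2 (integrableOn_const hc.measure_lt_top.ne)
  have hvK : volume.real K = ∫ s : ℝ, volume.real {t : ℝ | (s, t) ∈ K} := by
    rw [← integral_indicator_one hmeas]
    change ∫ p, K.indicator (fun _ => (1 : ℝ)) p = _
    rw [Measure.volume_eq_prod, integral_prod _ hKint]
    congr 1; ext s
    rw [← integral_indicator_one ((hsl2 s).1.isClosed.measurableSet)]
    rfl
  have hgi : Integrable (fun s : ℝ => volume.real {t : ℝ | (s, t) ∈ K}) volume := by
    have := hKint.integral_prod_left
    refine this.congr (Filter.Eventually.of_forall fun s => ?_)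
    simp only
    rw [← integral_indicator_one ((hsl2 s).1.isClosed.measurableSet)]
    rfl
  have hki : ∀ k : ℤ, Integrable (fun s : ℝ => K.indicator (fun _ => (1 : ℝ)) (s, (k : ℝ))) volume := by
    intro k
    exact (integrable_indicator_iff (hsl1 k).1.isClosed.measurableSet).2
      (integrableOn_const (C := (1:ℝ)) (hsl1 k).1.measure_lt_top.ne)
  have hsum : ∑ k ∈ S, volume.real {s : ℝ | (s, (k : ℝ)) ∈ K} =
      ∫ s : ℝ, ∑ k ∈ S, K.indicator (fun _ => (1 : ℝ)) (s, (k : ℝ)) := by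
    rw [integral_finsetSum _ (fun k _ => hki k)]
    refine Finset.sum_congr rfl fun k _ => ?_
    rw [← integral_indicator_one ((hsl1 k).1.isClosed.measurableSet)]
    rfl
  have e2 : |∑ k ∈ S, volume.real {s : ℝ | (s, (k : ℝ)) ∈ K} - volume.real K| ≤ 2 * M := by
    rw [hsum, hvK, ← integral_sub (integrable_finsetSum _ fun k _ => hki k) hgi]
    have hb : ∫ s : ℝ, (Set.Icc (-M) M).indicator (fun _ => (1 : ℝ)) s = 2 * M := by
      have := integral_indicator_one (μ := (volume : Measure ℝ)) (measurableSet_Icc (a := -M) (b := M))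
      rw [Real.volume_real_Icc_of_le (by linarith)] at this
      rw [show 2 * M = M - -M by ring, ← this]; rfl
    rw [← hb, ← Real.norm_eq_abs]
    apply norm_integral_le_of_norm_le
    · exact (integrable_indicator_iff measurableSet_Icc).2 (integrableOn_const (by simp))
    refine Filter.Eventually.of_forall fun s => ?_
    by_cases hs : s ∈ Set.Icc (-M) M
    · rw [Set.indicator_of_mem hs]
      exact count1 _ (hsl2 s).1 (hsl2 s).2 S (fun n hn => hS n (hK _ hn).2)
    · have : {t : ℝ | (s, t) ∈ K} = ∅ := by
        ext t; simp only [Set.mem_ofPred_eq, Set.mem_empty_iff_false, iff_false]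
        exact fun h => hs (abs_le.1 (hK _ h).1)
      have h0 : ∀ t : ℝ, (s, t) ∉ K := fun t h => by
        have : t ∈ {t : ℝ | (s, t) ∈ K} := h
        simp_all
      rw [Set.indicator_of_notMem hs, this]
      simp [h0]
  rw [abs_le] at *
  constructor <;> linarith [e1.1, e1.2, e2.1, e2.2]

/-- reduced basis -/
lemma reduce (v w : EuclideanSpace ℝ (Fin 2)) (hd : v 0 * w 1 - v 1 * w 0 ≠ 0)
    (lam1 : ℝ) (hl : 0 < lam1)
    (hmin : ∀ x ∈ Submodule.span ℤ ({v, w} : Set (EuclideanSpace ℝ (Fin 2))),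
          x ≠ 0 → lam1 ≤ ‖x‖)
    (hex : ∃ x ∈ Submodule.span ℤ ({v, w} : Set (EuclideanSpace ℝ (Fin 2))),
          x ≠ 0 ∧ ‖x‖ = lam1) :
    ∃ a b : EuclideanSpace ℝ (Fin 2),
      Submodule.span ℤ ({v, w} : Set (EuclideanSpace ℝ (Fin 2))) = Submodule.span ℤ {a, b} ∧
      |a 0 * b 1 - a 1 * b 0| = |v 0 * w 1 - v 1 * w 0| ∧
      lam1 * ‖a‖ ≤ 2 * |v 0 * w 1 - v 1 * w 0| ∧ lam1 * ‖b‖ ≤ 2 * |v 0 * w 1 - v 1 * w 0| := by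
  obtain ⟨a, ha, ha0, hal⟩ := hex
  obtain ⟨m, n, hmn⟩ := Submodule.mem_span_pair.1 ha
  -- coprime
  have hco : Int.gcd m n = 1 := by
    obtain ⟨m', hm'⟩ := Int.gcd_dvd_left m n
    obtain ⟨n', hn'⟩ := Int.gcd_dvd_right m n
    set g := Int.gcd m n with hg
    set y := m' • v + n' • w with hy
    have hya : a = (g : ℤ) • y := by
      rw [← hmn, hy, smul_add, smul_smul, smul_smul, ← hm', ← hn']
    have hy0 : y ≠ 0 := by
      intro h; rw [h, smul_zero] at hya; exact ha0 hya
    have hg0 : g ≠ 0 := by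
      intro h; rw [h] at hya; simp at hya; exact ha0 hya
    have h1 := hmin y (Submodule.mem_span_pair.2 ⟨m', n', rfl⟩) hy0
    have h2 : ‖a‖ = (g : ℝ) * ‖y‖ := by
      rw [hya, ← Int.cast_smul_eq_zsmul ℝ, norm_smul]; simp
    by_contra hne
    have h3 : 2 ≤ g := by omega
    have h4 : (2 : ℝ) ≤ g := by exact_mod_cast h3
    nlinarith
  have hbez := Int.gcd_eq_gcd_ab m n
  rw [hco] at hbez
  set p := Int.gcdA m n
  set q := Int.gcdB m n
  push_cast at hbez
  -- c = -q v + p w, det(a,c) = m p + n q = 1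
  set r : ℤ := round (inner ℝ a ((-q) • v + p • w) / ‖a‖ ^ 2) with hr
  set b := (-q - r * m) • v + (p - r * n) • w with hb
  have hbc : b = ((-q) • v + p • w) - r • a := by
    rw [hb, ← hmn]; module
  have hbmem : b ∈ Submodule.span ℤ ({v, w} : Set (EuclideanSpace ℝ (Fin 2))) :=
    Submodule.mem_span_pair.2 ⟨_, _, rfl⟩
  have hbezR : (m : ℝ) * p + n * q = 1 := by exact_mod_cast hbez.symm
  have hcoa : ∀ i, a i = m * v i + n * w i := by
    intro i; rw [← hmn]; simp
  have hcob : ∀ i, b i = (-q - r * m) * v i + (p - r * n) * w i := by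
    intro i; rw [hb]; simp
  have hdet : a 0 * b 1 - a 1 * b 0 = v 0 * w 1 - v 1 * w 0 := by
    rw [hcoa, hcoa, hcob, hcob]
    linear_combination (v 0 * w 1 - v 1 * w 0) * hbezR
  have hb0 : b ≠ 0 := by
    intro h
    apply hd
    rw [← hdet, h]; simp
  have hbl := hmin b hbmem hb0
  have hin : |inner ℝ a b| ≤ ‖a‖ ^ 2 / 2 := by
    have hpos : 0 < ‖a‖ ^ 2 := by rw [hal]; positivity
    have := abs_sub_round (inner ℝ a ((-q) • v + p • w) / ‖a‖ ^ 2)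
    rw [← hr] at this
    have e : inner ℝ a b = (inner ℝ a ((-q) • v + p • w) / ‖a‖ ^ 2 - r) * ‖a‖ ^ 2 := by
      rw [hbc, inner_sub_right, ← Int.cast_smul_eq_zsmul ℝ r a, inner_smul_right, real_inner_self_eq_norm_sq]
      field_simp
    rw [e, abs_mul, abs_of_pos hpos]
    nlinarith
  have hlag : (a 0 * b 1 - a 1 * b 0) ^ 2 = ‖a‖ ^ 2 * ‖b‖ ^ 2 - (inner ℝ a b) ^ 2 := by
    rw [EuclideanSpace.norm_sq_eq, EuclideanSpace.norm_sq_eq]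
    simp [Fin.sum_univ_two, PiLp.inner_apply]
    ring
  have hin2 : (inner ℝ a b) ^ 2 ≤ (‖a‖ ^ 2 / 2) ^ 2 := by
    rw [← sq_abs]
    gcongr
  have hkey : lam1 * ‖b‖ ≤ 2 * |v 0 * w 1 - v 1 * w 0| := by
    rw [← hdet]
    apply le_of_sq_le_sq _ (by positivity)
    rw [mul_pow, mul_pow, sq_abs, hlag]
    rw [hal] at *
    have : lam1 ^ 2 ≤ ‖b‖ ^ 2 := by gcongr
    nlinarith [sq_nonneg lam1]
  refine ⟨a, b, ?_, by rw [hdet], ?_, hkey⟩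
  · apply le_antisymm
    · rw [Submodule.span_le]
      rintro x (rfl | rfl)
      · -- v
        refine Submodule.mem_span_pair.2 ⟨p - r * n, -n, ?_⟩
        rw [hb, ← hmn]
        have : (p - r * n) * m + (-n) * (-q - r * m) = 1 := by linear_combination -hbez
        have h2 : (p - r * n) * n + (-n) * (p - r * n) = 0 := by ring
        calc _ = ((p - r * n) * m + (-n) * (-q - r * m)) • x + ((p - r * n) * n + (-n) * (p - r * n)) • w := by module
          _ = x := by rw [this, h2]; simp
      · refine Submodule.mem_span_pair.2 ⟨q + r * m, m, ?_⟩
        rw [hb, ← hmn]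
        have : (q + r * m) * m + m * (-q - r * m) = 0 := by ring
        have h2 : (q + r * m) * n + m * (p - r * n) = 1 := by linear_combination -hbez
        calc _ = ((q + r * m) * m + m * (-q - r * m)) • v + ((q + r * m) * n + m * (p - r * n)) • x := by module
          _ = x := by rw [this, h2]; simp
    · rw [Submodule.span_le]
      rintro x (rfl | rfl)
      · exact ha
      · exact hbmem
  · rw [hal]
    calc lam1 * lam1 ≤ lam1 * ‖b‖ := by gcongr
      _ ≤ _ := hkey

lemma sphere_fin (r : ℝ) (hr : 0 ≤ r) :
    μH[1] (Metric.sphere (0 : EuclideanSpace ℝ (Fin 2)) r) < ⊤ := by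
  let γ : ℝ → EuclideanSpace ℝ (Fin 2) := fun θ => !₂[r * Real.cos θ, r * Real.sin θ]
  have hγ : LipschitzWith (Real.toNNReal (2 * r)) γ := by
    apply LipschitzWith.of_dist_le_mul
    intro x y
    rw [Real.coe_toNNReal _ (by positivity), Real.dist_eq, EuclideanSpace.dist_eq]
    apply Real.sqrt_le_iff.2 ⟨by positivity, ?_⟩
    have h1 : |Real.cos x - Real.cos y| ≤ |x - y| := by
      exact Real.abs_cos_sub_cos_le x y
    have h2 : |Real.sin x - Real.sin y| ≤ |x - y| := by
      exact Real.abs_sin_sub_sin_le x y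
    simp only [Fin.sum_univ_two, Real.dist_eq, γ]
    simp only [PiLp.toLp_apply, Matrix.cons_val_zero, Matrix.cons_val_one, sq_abs, mul_pow, ← mul_sub]
    have h1' := sq_le_sq.2 h1
    have h2' := sq_le_sq.2 h2
    nlinarith [sq_nonneg r, mul_le_mul_of_nonneg_left h1' (sq_nonneg r), mul_le_mul_of_nonneg_left h2' (sq_nonneg r), mul_nonneg (sq_nonneg r) (sq_nonneg (x-y))]
  have hsub : Metric.sphere (0 : EuclideanSpace ℝ (Fin 2)) r ⊆ γ '' Set.Icc (-Real.pi) Real.pi := by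
    intro x hx
    have hx' : ‖x‖ = r := by simpa using hx
    let z : ℂ := ⟨x 0, x 1⟩
    have hz : ‖z‖ = r := by
      rw [← hx', EuclideanSpace.norm_eq, Complex.norm_eq_sqrt_sq_add_sq]
      simp [Fin.sum_univ_two, z]
    refine ⟨z.arg, ⟨(Complex.neg_pi_lt_arg z).le, Complex.arg_le_pi z⟩, ?_⟩
    ext i
    fin_cases i
    · simpa [γ, z, hz] using Complex.norm_mul_cos_arg z
    · simpa [γ, z, hz] using Complex.norm_mul_sin_arg z
  refine (measure_mono hsub).trans_lt ((hγ.hausdorffMeasure_image_le zero_le_one _).trans_lt ?_)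
  rw [hausdorffMeasure_real, Real.volume_Icc]
  simp only [ENNReal.rpow_one]
  exact ENNReal.mul_lt_top ENNReal.coe_lt_top ENNReal.ofReal_lt_top

lemma frontier_fin (R : Set (EuclideanSpace ℝ (Fin 2))) (hR : IsCompact R) (hv : Convex ℝ R)
    (hne : R.Nonempty) : μH[1] (frontier R) < ⊤ := by
  have hP : ∀ x : EuclideanSpace ℝ (Fin 2), ∃ y ∈ R, ∀ z ∈ R, inner ℝ (x - y) (z - y) ≤ 0 := by
    intro x
    obtain ⟨y, hy, h⟩ := exists_norm_eq_iInf_of_complete_convex hne hR.isComplete hv x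
    exact ⟨y, hy, (norm_eq_iInf_iff_real_inner_le_zero hv hy).1 h⟩
  choose P hPR hPi using hP
  have hlip0 : ∀ x y, ‖P x - P y‖ ≤ ‖x - y‖ := by
    intro x y
    have h1 := hPi x (P y) (hPR y)
    have h2 := hPi y (P x) (hPR x)
    have h3 : ‖P x - P y‖ ^ 2 ≤ inner ℝ (x - y) (P x - P y) := by
      have e : inner ℝ (x - y) (P x - P y) = ‖P x - P y‖ ^ 2 - inner ℝ (x - P x) (P y - P x)
          - inner ℝ (y - P y) (P x - P y) := by
        rw [← real_inner_self_eq_norm_sq]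
        simp only [inner_sub_left, inner_sub_right]
        ring
      linarith
    have h4 := real_inner_le_norm (x - y) (P x - P y)
    by_contra hcon
    push Not at hcon
    nlinarith [norm_nonneg (x - y), norm_nonneg (P x - P y)]
  have hlip : LipschitzWith 1 P := by
    apply LipschitzWith.of_dist_le_mul
    intro x y
    simpa [dist_eq_norm] using hlip0 x y
  have huniq : ∀ x z, z ∈ R → (∀ y ∈ R, inner ℝ (x - z) (y - z) ≤ 0) → P x = z := by
    intro x z hz h
    have h1 := hPi x z hz
    have h2 := h (P x) (hPR x)
    have e : ‖P x - z‖ ^ 2 = inner ℝ (x - P x) (z - P x) + inner ℝ (x - z) (P x - z) := by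
        rw [← real_inner_self_eq_norm_sq]
        simp only [inner_sub_left, inner_sub_right]
        ring
    have : ‖P x - z‖ = 0 := by nlinarith [norm_nonneg (P x - z)]
    exact sub_eq_zero.1 (norm_eq_zero.1 this)
  obtain ⟨ρ, hρ0, hρ⟩ := hR.isBounded.exists_pos_norm_lt
  have hsub : P '' Rᶜ ⊆ P '' Metric.sphere 0 ρ := by
    rintro _ ⟨q, hq, rfl⟩
    have hne : 0 < ‖q - P q‖ := by
      rw [norm_pos_iff, sub_ne_zero]
      intro h; exact hq (h ▸ hPR q)
    have hcont : ContinuousOn (fun t : ℝ => ‖P q + t • (q - P q)‖) (Set.Icc 0 (2 * ρ / ‖q - P q‖)) := by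
      fun_prop
    have hivt := intermediate_value_Icc (by positivity) hcont
    have hmem : ρ ∈ Set.Icc ‖P q + (0 : ℝ) • (q - P q)‖ ‖P q + (2 * ρ / ‖q - P q‖) • (q - P q)‖ := by
      have hb := hρ _ (hPR q)
      constructor
      · simpa using hb.le
      · have h1 := norm_sub_norm_le ((2 * ρ / ‖q - P q‖) • (q - P q)) (-(P q))
        rw [norm_smul, Real.norm_of_nonneg (by positivity), div_mul_cancel₀ _ hne.ne', norm_neg,
          sub_neg_eq_add, add_comm _ (P q)] at h1
        linarith
    obtain ⟨t, ht, hte⟩ := hivt hmem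
    refine ⟨P q + t • (q - P q), by simpa using hte, ?_⟩
    apply huniq _ _ (hPR q)
    intro y hy
    rw [add_sub_cancel_left, inner_smul_left]
    exact mul_nonpos_of_nonneg_of_nonpos (by simpa using ht.1) (hPi q y hy)
  have hK : IsClosed (P '' Metric.sphere 0 ρ) :=
    ((isCompact_sphere _ _).image hlip.continuous).isClosed
  have hfr : frontier R ⊆ P '' Metric.sphere 0 ρ := by
    intro p hp
    have hpR : p ∈ R := hR.isClosed.frontier_subset hp
    have hpP : P p = p := huniq p p hpR (by simp)
    rw [frontier_eq_closure_inter_closure] at hp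
    have := image_closure_subset_closure_image hlip.continuous (Set.mem_image_of_mem P hp.2)
    rw [hpP] at this
    exact closure_minimal hsub hK this
  refine (measure_mono hfr).trans_lt ((hlip.hausdorffMeasure_image_le zero_le_one _).trans_lt ?_)
  simpa using sphere_fin ρ hρ0.le

lemma frontier_lower (R : Set (EuclideanSpace ℝ (Fin 2))) (hR : IsCompact R) (hv : Convex ℝ R)
    (h0 : (0 : EuclideanSpace ℝ (Fin 2)) ∈ R) (x : EuclideanSpace ℝ (Fin 2)) (hx : x ∈ R) :
    ‖x‖ ≤ (μH[1] (frontier R)).toReal := by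
  rcases eq_or_ne x 0 with rfl | hx0
  · simp
  have hρ : 0 < ‖x‖ := norm_pos_iff.2 hx0
  let f : EuclideanSpace ℝ (Fin 2) → ℝ := fun y => inner ℝ (‖x‖⁻¹ • x) y
  have hn : ‖‖x‖⁻¹ • x‖ = 1 := by rw [norm_smul]; simp [hρ.ne']
  have hf : LipschitzWith 1 f := by
    apply LipschitzWith.of_dist_le_mul
    intro y z
    simp only [f, Real.dist_eq, ← inner_sub_right, dist_eq_norm]
    have := abs_real_inner_le_norm (‖x‖⁻¹ • x) (y - z)
    rw [hn] at this
    simpa using this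
  let e : EuclideanSpace ℝ (Fin 2) := !₂[-(x 1), x 0]
  have he : inner ℝ x e = 0 := by
    simp [e, PiLp.inner_apply, Fin.sum_univ_two]; ring
  have hen : e ≠ 0 := by
    intro h
    apply hx0
    have h1 := congrArg (fun y => y 0) h
    have h2 := congrArg (fun y => y 1) h
    simp [e] at h1 h2
    ext i; fin_cases i <;> simp [h1, h2]
  have hsub : Set.Icc 0 ‖x‖ ⊆ f '' frontier R := by
    intro c hc
    let z := (c / ‖x‖) • x
    have hz : z ∈ R := by
      have := hv.smul_mem_of_zero_mem h0 hx (t := c / ‖x‖) ⟨by have := hc.1; positivity, (div_le_one hρ).2 hc.2⟩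
      exact this
    have hcont : Continuous (fun t : ℝ => z + t • e) := by fun_prop
    obtain ⟨B, hB0, hB⟩ := hR.isBounded.exists_pos_norm_lt
    have hout : ∃ t : ℝ, z + t • e ∉ R := by
      refine ⟨2 * B / ‖e‖, fun h => ?_⟩
      have h1 := hB _ h
      have h2 := hB _ hz
      have h3 := norm_sub_le (z + (2 * B / ‖e‖) • e) z
      rw [add_sub_cancel_left, norm_smul, Real.norm_of_nonneg (by positivity), div_mul_cancel₀ _ (norm_ne_zero_iff.2 hen)] at h3
      linarith
    obtain ⟨t1, ht1⟩ := hout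
    have hs : (frontier ((fun t : ℝ => z + t • e) ⁻¹' R)).Nonempty := by
      rw [nonempty_frontier_iff]
      refine ⟨⟨0, by simpa using hz⟩, fun h => ht1 ?_⟩
      have : t1 ∈ (fun t : ℝ => z + t • e) ⁻¹' R := by rw [h]; trivial
      exact this
    obtain ⟨t, ht⟩ := hs
    have hy : z + t • e ∈ frontier R := hcont.frontier_preimage_subset R ht
    refine ⟨_, hy, ?_⟩
    simp only [f, z, inner_add_right, inner_smul_left, inner_smul_right, he, real_inner_self_eq_norm_sq]
    simp
    field_simp
  have h1 : ENNReal.ofReal ‖x‖ ≤ μH[1] (frontier R) := by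
    calc ENNReal.ofReal ‖x‖ = μH[1] (Set.Icc 0 ‖x‖) := by
          rw [hausdorffMeasure_real, Real.volume_Icc, sub_zero]
      _ ≤ μH[1] (f '' frontier R) := measure_mono hsub
      _ ≤ _ := by simpa using hf.hausdorffMeasure_image_le zero_le_one (frontier R)
  exact (ENNReal.ofReal_le_iff_le_toReal (frontier_fin R hR hv ⟨0, h0⟩).ne).1 h1

lemma main_count (a b : EuclideanSpace ℝ (Fin 2)) (hd : a 0 * b 1 - a 1 * b 0 ≠ 0)
    (R : Set (EuclideanSpace ℝ (Fin 2))) (hR : IsCompact R) (hv : Convex ℝ R)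
    (h0 : (0 : EuclideanSpace ℝ (Fin 2)) ∈ R) (M L : ℝ) (hM : 0 ≤ M) (hL : 0 ≤ L)
    (hRL : ∀ x ∈ R, ‖x‖ ≤ L)
    (ha : L * ‖a‖ ≤ M * |a 0 * b 1 - a 1 * b 0|) (hb : L * ‖b‖ ≤ M * |a 0 * b 1 - a 1 * b 0|) :
    |(({x : EuclideanSpace ℝ (Fin 2) |
            x ∈ Submodule.span ℤ ({a, b} : Set (EuclideanSpace ℝ (Fin 2))) ∧
            x ∈ R ∧ x ≠ 0}.ncard : ℝ) -
          (volume R).toReal / |a 0 * b 1 - a 1 * b 0|)| ≤ 6 * M := by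
  classical
  set d := a 0 * b 1 - a 1 * b 0 with hdd
  have hdpos : 0 < |d| := abs_pos.2 hd
  let T : ℝ × ℝ → EuclideanSpace ℝ (Fin 2) := fun p => p.1 • a + p.2 • b
  have hTc : Continuous T := by fun_prop
  have hT0 : ∀ p, T p 0 = p.1 * a 0 + p.2 * b 0 := by intro p; simp [T]
  have hT1 : ∀ p, T p 1 = p.1 * a 1 + p.2 * b 1 := by intro p; simp [T]
  let K : Set (ℝ × ℝ) := T ⁻¹' R
  have hdetle : ∀ x y : EuclideanSpace ℝ (Fin 2), |x 0 * y 1 - x 1 * y 0| ≤ ‖x‖ * ‖y‖ := by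
    intro x y
    apply abs_le_of_sq_le_sq _ (by positivity)
    rw [mul_pow, EuclideanSpace.norm_sq_eq, EuclideanSpace.norm_sq_eq]
    simp only [Fin.sum_univ_two, Real.norm_eq_abs, sq_abs]
    nlinarith [sq_nonneg (x 0 * y 0 + x 1 * y 1)]
  have hKM : ∀ p ∈ K, |p.1| ≤ M ∧ |p.2| ≤ M := by
    intro p hp
    have hn := hRL _ hp
    constructor
    · have h1 := hdetle (T p) b
      have e : T p 0 * b 1 - T p 1 * b 0 = p.1 * d := by rw [hT0, hT1, hdd]; ring
      rw [e, abs_mul] at h1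
      have h2 : ‖T p‖ * ‖b‖ ≤ L * ‖b‖ := by gcongr
      exact le_of_mul_le_mul_right (by linarith) hdpos
    · have h1 := hdetle a (T p)
      have e : a 0 * T p 1 - a 1 * T p 0 = p.2 * d := by rw [hT0, hT1, hdd]; ring
      rw [e, abs_mul] at h1
      have h2 : ‖a‖ * ‖T p‖ ≤ L * ‖a‖ := by rw [mul_comm]; gcongr
      exact le_of_mul_le_mul_right (by linarith) hdpos
  have hKsub : K ⊆ Set.Icc (-M) M ×ˢ Set.Icc (-M) M := fun p hp =>
    ⟨abs_le.1 (hKM p hp).1, abs_le.1 (hKM p hp).2⟩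
  have hKc : IsCompact K :=
    (isCompact_Icc.prod isCompact_Icc).of_isClosed_subset (hR.isClosed.preimage hTc) hKsub
  have hKv : Convex ℝ K := by
    intro x hx y hy s t hs ht hst
    have := hv hx hy hs ht hst
    have e : T (s • x + t • y) = s • T x + t • T y := by
      simp only [T, Prod.fst_add, Prod.snd_add, Prod.smul_fst, Prod.smul_snd, smul_eq_mul]
      module
    change T (s • x + t • y) ∈ R
    rw [e]; exact this
  -- volume
  have hvol : volume.real K = (volume R).toReal / |d| := by
    let A : (Fin 2 → ℝ) →ₗ[ℝ] (Fin 2 → ℝ) := Matrix.toLin' !![a 0, b 0; a 1, b 1]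
    have hA : LinearMap.det A = d := by
      simp only [A, LinearMap.det_toLin', Matrix.det_fin_two_of, hdd]; ring
    have e1 : volume (WithLp.toLp 2 ⁻¹' R : Set (Fin 2 → ℝ)) = volume R :=
      (PiLp.volume_preserving_toLp (Fin 2)).measure_preimage hR.isClosed.measurableSet.nullMeasurableSet
    have e2 : volume (MeasurableEquiv.finTwoArrow (α := ℝ) ⁻¹' K) = volume K :=
      (volume_preserving_finTwoArrow ℝ).measure_preimage hKc.isClosed.measurableSet.nullMeasurableSet
    have e3 : (MeasurableEquiv.finTwoArrow (α := ℝ) ⁻¹' K) = A ⁻¹' (WithLp.toLp 2 ⁻¹' R) := by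
      ext c
      have : T (MeasurableEquiv.finTwoArrow c) = WithLp.toLp 2 (A c) := by
        ext i
        fin_cases i
        · simp [T, A, MeasurableEquiv.finTwoArrow, Matrix.mulVec, dotProduct, Fin.sum_univ_two]; ring
        · simp [T, A, MeasurableEquiv.finTwoArrow, Matrix.mulVec, dotProduct, Fin.sum_univ_two]; ring
      simp only [Set.mem_preimage, K, this]
    rw [Measure.real, ← e2, e3, Measure.addHaar_preimage_linearMap _ (by rw [hA]; exact hd), e1, hA,
      ENNReal.toReal_mul, ENNReal.toReal_ofReal (abs_nonneg _), abs_inv]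
    field_simp
  rw [← hvol]
  -- counting
  let S : Finset ℤ := Finset.Icc (-⌊M⌋) ⌊M⌋
  have hS : ∀ n : ℤ, |(n : ℝ)| ≤ M → n ∈ S := by
    intro n hn
    rw [abs_le] at hn
    rw [Finset.mem_Icc]
    have h1 : -n ≤ ⌊M⌋ := Int.le_floor.2 (by push_cast; linarith)
    exact ⟨by omega, Int.le_floor.2 hn.2⟩
  have hScard : (S.card : ℝ) ≤ 2 * M + 1 := by
    have h0 : 0 ≤ ⌊M⌋ := Int.floor_nonneg.2 hM
    have : (S.card : ℤ) = 2 * ⌊M⌋ + 1 := by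
      rw [Int.card_Icc, Int.toNat_of_nonneg (by omega)]; ring
    have : (S.card : ℝ) = 2 * ⌊M⌋ + 1 := by exact_mod_cast this
    linarith [Int.floor_le M]
  let F : Finset (ℤ × ℤ) := (S ×ˢ S).filter (fun p => ((p.1 : ℝ), (p.2 : ℝ)) ∈ K)
  have hFmem : ∀ p : ℤ × ℤ, p ∈ F ↔ ((p.1 : ℝ), (p.2 : ℝ)) ∈ K := by
    intro p
    simp only [F, Finset.mem_filter, Finset.mem_product, and_iff_right_iff_imp]
    exact fun h => ⟨hS _ (hKM _ h).1, hS _ (hKM _ h).2⟩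
  let φ : ℤ × ℤ → EuclideanSpace ℝ (Fin 2) := fun p => T ((p.1 : ℝ), (p.2 : ℝ))
  have hφ : Function.Injective φ := by
    intro p q hpq
    have c0 : T ((p.1 : ℝ), (p.2 : ℝ)) 0 = T ((q.1 : ℝ), (q.2 : ℝ)) 0 := by
      exact congrArg (fun y : EuclideanSpace ℝ (Fin 2) => y 0) hpq
    have c1 : T ((p.1 : ℝ), (p.2 : ℝ)) 1 = T ((q.1 : ℝ), (q.2 : ℝ)) 1 := by
      exact congrArg (fun y : EuclideanSpace ℝ (Fin 2) => y 1) hpq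
    rw [hT0, hT0] at c0
    rw [hT1, hT1] at c1
    have f1 : (p.1 : ℝ) = q.1 := by
      apply mul_right_cancel₀ hd
      rw [hdd]; linear_combination b 1 * c0 - b 0 * c1
    have f2 : (p.2 : ℝ) = q.2 := by
      apply mul_right_cancel₀ hd
      rw [hdd]; linear_combination a 0 * c1 - a 1 * c0
    exact Prod.ext (by exact_mod_cast f1) (by exact_mod_cast f2)
  have hφ0 : φ 0 = 0 := by simp [φ, T]
  have h0F : (0 : ℤ × ℤ) ∈ F := by
    rw [hFmem]; change φ 0 ∈ R; rw [hφ0]; exact h0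
  have hset : {x : EuclideanSpace ℝ (Fin 2) |
            x ∈ Submodule.span ℤ ({a, b} : Set (EuclideanSpace ℝ (Fin 2))) ∧
            x ∈ R ∧ x ≠ 0} = φ '' ((F.erase 0 : Finset (ℤ × ℤ)) : Set (ℤ × ℤ)) := by
    ext x
    constructor
    · rintro ⟨hx, hxR, hx0⟩
      obtain ⟨m, n, rfl⟩ := Submodule.mem_span_pair.1 hx
      have e : φ (m, n) = m • a + n • b := by
        simp only [φ, T, Int.cast_smul_eq_zsmul]
      refine ⟨(m, n), ?_, e⟩
      rw [Finset.mem_coe, Finset.mem_erase, hFmem]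
      refine ⟨fun h => hx0 ?_, ?_⟩
      · rw [← e, h, hφ0]
      · change φ (m, n) ∈ R
        rw [e]; exact hxR
    · rintro ⟨p, hp, rfl⟩
      rw [Finset.mem_coe, Finset.mem_erase, hFmem] at hp
      refine ⟨Submodule.mem_span_pair.2 ⟨p.1, p.2, ?_⟩, hp.2, fun h => hp.1 ?_⟩
      · simp only [φ, T, Int.cast_smul_eq_zsmul]
      · exact hφ (h.trans hφ0.symm)
  rw [hset, Set.ncard_image_of_injective _ hφ, Set.ncard_coe_finset]
  have hcard : ((F.erase 0).card : ℝ) + 1 = F.card := by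
    exact_mod_cast Finset.card_erase_add_one h0F
  rcases lt_or_ge M 1 with hM1 | hM1
  · have hF0 : F.erase 0 = ∅ := by
      rw [Finset.eq_empty_iff_forall_notMem]
      intro p hp
      rw [Finset.mem_erase, hFmem] at hp
      have h := hKM _ hp.2
      have aux : ∀ n : ℤ, |(n : ℝ)| ≤ M → n = 0 := by
        intro n hn
        have : |(n : ℝ)| < 1 := by linarith
        have : |n| < 1 := by exact_mod_cast this
        exact Int.abs_lt_one_iff.1 this
      exact hp.1 (Prod.ext (aux _ h.1) (aux _ h.2))
    have hle : volume.real K ≤ (2 * M) * (2 * M) := by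
      have hh : volume.real K ≤ volume.real (Set.Icc (-M) M ×ˢ Set.Icc (-M) M : Set (ℝ × ℝ)) :=
        measureReal_mono hKsub (isCompact_Icc.prod isCompact_Icc).measure_lt_top.ne
      rw [Measure.volume_eq_prod, measureReal_prod_prod, Real.volume_real_Icc_of_le (by linarith)] at hh
      calc volume.real K ≤ _ := hh
        _ = _ := by ring
    rw [hF0, Finset.card_empty, Nat.cast_zero, zero_sub, abs_neg, abs_of_nonneg measureReal_nonneg]
    nlinarith
  · have h2 := count2 K hKc hKv M hM hKM S hS
    have hFc : ∑ k ∈ S, ∑ m ∈ S, K.indicator (fun _ => (1 : ℝ)) ((m : ℝ), (k : ℝ)) = F.card := by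
      rw [Finset.sum_comm, ← Finset.sum_product']
      simp only [Set.indicator_apply]
      rw [Finset.sum_boole]
    rw [hFc, ← hcard] at h2
    rw [abs_le] at *
    constructor <;> linarith [h2.1, h2.2]


/-- **Lattice point counting in planar domains.** There is an absolute constant `C` such
that for any rank-2 lattice `Λ = ℤv + ℤw` in the Euclidean plane, with shortest nonzero
vector of length `λ1`, and any compact convex region `R` containing the origin,
the number of nonzero lattice points in `R` equals `area R / det Λ`
up to an error at most `C · |∂R| / λ1`. -/
theorem stmt_14 :
    ∃ C : ℝ, 0 < C ∧
      ∀ (v w : EuclideanSpace ℝ (Fin 2)), LinearIndependent ℝ ![v, w] →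
      ∀ (R : Set (EuclideanSpace ℝ (Fin 2))), IsCompact R → Convex ℝ R →
        (0 : EuclideanSpace ℝ (Fin 2)) ∈ R →
      ∀ (lam1 : ℝ), 0 < lam1 →
        (∀ x ∈ Submodule.span ℤ ({v, w} : Set (EuclideanSpace ℝ (Fin 2))),
          x ≠ 0 → lam1 ≤ ‖x‖) →
        (∃ x ∈ Submodule.span ℤ ({v, w} : Set (EuclideanSpace ℝ (Fin 2))),
          x ≠ 0 ∧ ‖x‖ = lam1) →
      abs (({x : EuclideanSpace ℝ (Fin 2) |
            x ∈ Submodule.span ℤ ({v, w} : Set (EuclideanSpace ℝ (Fin 2))) ∧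
            x ∈ R ∧ x ≠ 0}.ncard : ℝ) -
          (volume R).toReal / abs (v 0 * w 1 - v 1 * w 0)) ≤
        C * (μH[1] (frontier R)).toReal / lam1 := by
  refine ⟨12, by norm_num, ?_⟩
  intro v w hli R hR hv h0 lam1 hl hmin hex
  have hd : v 0 * w 1 - v 1 * w 0 ≠ 0 := by
    intro hd
    rw [LinearIndependent.pair_iff] at hli
    have h1 := hli (w 1) (-(v 1)) (by
      ext i; fin_cases i
      · simp; linear_combination hd
      · simp; ring)
    have h2 := hli (w 0) (-(v 0)) (by
      ext i; fin_cases i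
      · simp; ring
      · simp; linear_combination -hd)
    have hv0 : v = 0 := by
      ext i; fin_cases i
      · simpa using h2.2
      · simpa using h1.2
    have := hli 1 0 (by simp [hv0])
    simp at this
  obtain ⟨a, b, hspan, hdet, ha, hb⟩ := reduce v w hd lam1 hl hmin hex
  set L := (μH[1] (frontier R)).toReal with hL
  have hL0 : 0 ≤ L := ENNReal.toReal_nonneg
  have hd' : a 0 * b 1 - a 1 * b 0 ≠ 0 := by
    rw [← abs_pos, hdet]; exact abs_pos.2 hd
  have key : ∀ x : ℝ, lam1 * x ≤ 2 * |v 0 * w 1 - v 1 * w 0| →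
      L * x ≤ 2 * L / lam1 * |a 0 * b 1 - a 1 * b 0| := by
    intro x hx
    rw [hdet, div_mul_eq_mul_div, le_div_iff₀ hl]
    nlinarith
  have := main_count a b hd' R hR hv h0 (2 * L / lam1) L (by positivity) hL0
    (fun x hx => frontier_lower R hR hv h0 x hx) (key _ ha) (key _ hb)
  rw [hspan, ← hdet]
  refine this.trans (le_of_eq ?_)
  ring
end
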